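/- Let μ, λ ∈ ℝ⁴ be probability vectors sorted non-increasingly with μ ≻ λ, and suppose λ satisfies λ₁ ≤ λ₃ + 2√(λ₂λ₄). If λ is an extreme point of the set S = {sorted probability vectors ν ∈ ℝ⁴ : ν₁ ≤ ν₃ + 2√(ν₂ν₄)} (viewed via the correspondence with diagonal states), then μ = λ whenever λ is written as a convex combination involving permutations of μ. In particular, by Uhlmann's theorem, μ ≻ λ with μ ≠ λ implies λ = Σⱼ pⱼ Pⱼ diag(μ) Pⱼᵀ with at least two distinct permutation terms, exhibiting λ as a non-extreme point of the set of absolutely separable two-qubit states. -/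

import Mathlib

/-! The set `ASSpectra` is convex, and Rado's theorem writes a vector majorized by `μ` as
a convex combination of permutations of `μ`. The permutations of `μ` lie in `ASSpectra`, so
their convex hull does too; an extreme point of `ASSpectra` lying in this hull is extreme
in the hull, hence is itself a permutation of `μ`, and two sorted vectors that are
permutations of each other coincide.

Convexity (`convex_ASSpectra`): if the sorted vector satisfies `ν₁ ≤ ν₃ + 2√(ν₂ν₄)`, then the
same inequality holds after every permutation of the entries (`ASCond.of_injective`). Thus
`ASSpectra` is cut out by conditions `νᵢ ≤ νₖ + 2√(νⱼνₘ)`, each of which is convex because the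
geometric mean is superadditive.

Rado's theorem (`mem_convexHull_of_majorizes`): otherwise a linear functional `c` strictly
separates `l` from all permutations of `μ`; sorting the coefficients of `c` and summing by
parts against the majorization inequalities bounds `c l` by the value of `c` at one of these
permutations. -/

/-- The sum of the `k` largest entries of `u`. -/
noncomputable def maxSum {n : ℕ} (u : Fin n → ℝ) (k : ℕ) : ℝ :=
  sSup {s : ℝ | ∃ A : Finset (Fin n), A.card = k ∧ ∑ i ∈ A, u i = s}

/-- `Majorizes v u` means `u ≺ v`. -/
def Majorizes {n : ℕ} (v u : Fin n → ℝ) : Prop :=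
  (∀ k : ℕ, maxSum u k ≤ maxSum v k) ∧ ∑ i, u i = ∑ i, v i

/-- The spectral condition `ν₁ ≤ ν₃ + 2√(ν₂ν₄)` for absolute separability of a
two-qubit state, for a sorted vector `ν`. -/
def ASCond (ν : Fin 4 → ℝ) : Prop :=
  ν 0 ≤ ν 2 + 2 * Real.sqrt (ν 1 * ν 3)

/-- The permutation-closed set of probability vectors in `ℝ⁴` whose non-increasing
rearrangement satisfies the absolute-separability condition (the diagonal slice of the
set of absolutely separable two-qubit states). -/
def ASSpectra : Set (Fin 4 → ℝ) :=
  {ν | (∑ i, ν i = 1) ∧ (∀ i, 0 ≤ ν i) ∧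
    ∃ σ : Equiv.Perm (Fin 4), Antitone (ν ∘ σ) ∧ ASCond (ν ∘ σ)}

/-- The geometric mean is superadditive. -/
lemma sqrt_mul_add_sqrt_mul_le {a b c d : ℝ} (ha : 0 ≤ a) (hb : 0 ≤ b) (hc : 0 ≤ c)
    (hd : 0 ≤ d) : √(a * b) + √(c * d) ≤ √((a + c) * (b + d)) := by
  apply Real.le_sqrt_of_sq_le
  rw [Real.sqrt_mul ha, Real.sqrt_mul hc]
  nlinarith [Real.sq_sqrt ha, Real.sq_sqrt hb, Real.sq_sqrt hc, Real.sq_sqrt hd,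
    sq_nonneg (√a * √d - √b * √c), mul_pow √a √b 2, mul_pow √c √d 2, mul_pow √a √d 2,
    mul_pow √b √c 2]

/-- For a sorted vector, the inequality `ν₁ ≤ ν₃ + 2√(ν₂ν₄)` is the strongest among those
obtained from it by permuting the entries. -/
lemma ASCond.of_injective {ν : Fin 4 → ℝ} (hν : Antitone ν) (h0 : ∀ i, 0 ≤ ν i)
    (h : ASCond ν) {p : Fin 4 → Fin 4} (hp : Function.Injective p) : ASCond (ν ∘ p) := by
  -- In terms of `s i = √(ν i)` all the inequalities are polynomial.
  obtain ⟨s, hs0, hs⟩ : ∃ s : Fin 4 → ℝ, (∀ i, 0 ≤ s i) ∧ ∀ i, ν i = s i ^ 2 :=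
    ⟨fun i => √(ν i), fun i => Real.sqrt_nonneg _, fun i => (Real.sq_sqrt (h0 i)).symm⟩
  have hsq : ∀ i j, √(ν i * ν j) = s i * s j := fun i j => by
    rw [hs, hs, ← mul_pow, Real.sqrt_sq (mul_nonneg (hs0 i) (hs0 j))]
  have hanti : ∀ i j, i ≤ j → s j ≤ s i := fun i j hij =>
    (sq_le_sq₀ (hs0 j) (hs0 i)).1 (by rw [← hs, ← hs]; exact hν hij)
  have h01 := hanti 0 1 (by decide)
  have h12 := hanti 1 2 (by decide)
  have h23 := hanti 2 3 (by decide)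
  have h3 := hs0 3
  have main : s 0 ^ 2 ≤ s 2 ^ 2 + 2 * (s 1 * s 3) := by
    have := h
    unfold ASCond at this
    rwa [hsq, hs, hs] at this
  have key : ∀ i j k m : Fin 4, i ≠ j → i ≠ k → i ≠ m → j ≠ k → j ≠ m → k ≠ m →
      s i ^ 2 ≤ s k ^ 2 + 2 * (s j * s m) := by
    have p01 := mul_nonneg (sub_nonneg.2 h01) (sub_nonneg.2 h12)
    have q1 := mul_nonneg (sub_nonneg.2 h12) (sub_nonneg.2 h23)
    have q2 := mul_nonneg (sub_nonneg.2 h01) (sub_nonneg.2 h23)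
    have r1 := mul_nonneg (sub_nonneg.2 h01) h3
    have r2 := mul_nonneg (sub_nonneg.2 h12) h3
    have r3 := mul_nonneg (sub_nonneg.2 h23) h3
    intro i j k m hij hik him hjk hjm hkm
    fin_cases i <;> fin_cases j <;> first | exact absurd rfl hij | skip
    all_goals fin_cases k <;> first | exact absurd rfl hik | exact absurd rfl hjk | skip
    all_goals
      fin_cases m <;>
        first | exact absurd rfl him | exact absurd rfl hjm | exact absurd rfl hkm | skip
    all_goals
      simp only [Fin.zero_eta, Fin.mk_one, Fin.reduceFinMk]
      nlinarith only [main, p01, q1, q2, r1, r2, r3, sq_nonneg (s 0 - s 1),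
        sq_nonneg (s 1 - s 2), sq_nonneg (s 2 - s 3), sq_nonneg (s 3)]
  have hne : ∀ i j : Fin 4, i ≠ j → p i ≠ p j := fun i j hij => hp.ne hij
  simp only [ASCond, Function.comp_apply, hsq]
  rw [hs, hs]
  exact key _ _ _ _ (hne _ _ (by decide)) (hne _ _ (by decide)) (hne _ _ (by decide))
    (hne _ _ (by decide)) (hne _ _ (by decide)) (hne _ _ (by decide))

lemma exists_perm_antitone (ν : Fin 4 → ℝ) :
    ∃ σ : Equiv.Perm (Fin 4), Antitone (ν ∘ σ) :=
  ⟨Tuple.sort (fun i => -ν i), fun _ _ hij =>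
    neg_le_neg_iff.1 (Tuple.monotone_sort (fun i => -ν i) hij)⟩

/-- Membership in `ASSpectra` without sorting: the spectral condition holds for every ordering
of the entries. -/
lemma mem_ASSpectra_iff {ν : Fin 4 → ℝ} :
    ν ∈ ASSpectra ↔
      (∑ i, ν i = 1) ∧ (∀ i, 0 ≤ ν i) ∧ ∀ τ : Equiv.Perm (Fin 4), ASCond (ν ∘ τ) := by
  constructor
  · rintro ⟨h1, h0, σ, hσ, h⟩
    refine ⟨h1, h0, fun τ => ?_⟩
    have := h.of_injective hσ (fun i => h0 _) (σ⁻¹ * τ).injective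
    convert this using 1
    ext i
    simp
  · rintro ⟨h1, h0, h⟩
    obtain ⟨σ, hσ⟩ := exists_perm_antitone ν
    exact ⟨h1, h0, σ, hσ, h σ⟩

lemma convex_ASSpectra : Convex ℝ ASSpectra := by
  intro x hx y hy a b ha hb hab
  rw [mem_ASSpectra_iff] at *
  obtain ⟨x1, x0, hx⟩ := hx
  obtain ⟨y1, y0, hy⟩ := hy
  refine ⟨?_, fun i => ?_, fun τ => ?_⟩
  · simp [Finset.sum_add_distrib, ← Finset.mul_sum, x1, y1, hab]
  · have := mul_nonneg ha (x0 i)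
    have := mul_nonneg hb (y0 i)
    simp only [Pi.add_apply, Pi.smul_apply, smul_eq_mul]
    positivity
  · have hxτ := mul_le_mul_of_nonneg_left (hx τ) ha
    have hyτ := mul_le_mul_of_nonneg_left (hy τ) hb
    have hs := sqrt_mul_add_sqrt_mul_le (mul_nonneg ha (x0 (τ 1))) (mul_nonneg ha (x0 (τ 3)))
      (mul_nonneg hb (y0 (τ 1))) (mul_nonneg hb (y0 (τ 3)))
    rw [mul_mul_mul_comm a, mul_mul_mul_comm b, Real.sqrt_mul (mul_self_nonneg a),
      Real.sqrt_mul (mul_self_nonneg b), Real.sqrt_mul_self ha, Real.sqrt_mul_self hb] at hs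
    simp only [ASCond, Function.comp_apply, Pi.add_apply, Pi.smul_apply, smul_eq_mul] at *
    linarith

lemma sum_le_maxSum {n : ℕ} (u : Fin n → ℝ) (A : Finset (Fin n)) :
    ∑ i ∈ A, u i ≤ maxSum u A.card := by
  refine le_csSup (Set.Finite.bddAbove ?_) ⟨A, rfl, rfl⟩
  exact (Set.finite_range fun A : Finset (Fin n) => ∑ i ∈ A, u i).subset
    fun s ⟨A, _, hA⟩ => ⟨A, hA⟩

/-- Every threshold `t` bounds `maxSum`; equality holds when `t` is the `k`-th largest entry. -/
lemma maxSum_le {n : ℕ} (u : Fin n → ℝ) {k : ℕ} (hk : k ≤ n) (t : ℝ) :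
    maxSum u k ≤ k * t + ∑ i, max (u i - t) 0 := by
  apply csSup_le
  · obtain ⟨A, -, hA⟩ := Finset.exists_subset_card_eq
      (s := (Finset.univ : Finset (Fin n))) (n := k) (by simpa using hk)
    exact ⟨_, A, hA, rfl⟩
  · rintro _ ⟨A, rfl, rfl⟩
    calc ∑ i ∈ A, u i = A.card * t + ∑ i ∈ A, (u i - t) := by
          simp [Finset.sum_sub_distrib]
      _ ≤ A.card * t + ∑ i ∈ A, max (u i - t) 0 := by
          gcongr; exact le_max_left _ _
      _ ≤ A.card * t + ∑ i, max (u i - t) 0 := by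
          gcongr
          exact Finset.subset_univ _

/-- Rearrangement inequality for majorized vectors, by summation by parts. -/
lemma sum_mul_le_of_majorizes {l μ d : Fin 4 → ℝ} (hμ : Antitone μ) (hd : Antitone d)
    (hmaj : Majorizes μ l) (σ : Equiv.Perm (Fin 4)) :
    ∑ i, d i * l (σ i) ≤ ∑ i, d i * μ i := by
  obtain ⟨hm, hsum⟩ := hmaj
  rw [← Equiv.sum_comp σ] at hsum
  have m01 : μ 1 ≤ μ 0 := hμ (by decide)
  have m12 : μ 2 ≤ μ 1 := hμ (by decide)
  have m23 : μ 3 ≤ μ 2 := hμ (by decide)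
  have d01 : d 1 ≤ d 0 := hd (by decide)
  have d12 : d 2 ≤ d 1 := hd (by decide)
  have d23 : d 3 ≤ d 2 := hd (by decide)
  have lower : ∀ B : Finset (Fin 4), ∑ i ∈ B, l (σ i) ≤ maxSum μ B.card := fun B => by
    have := sum_le_maxSum l (B.map σ.toEmbedding)
    rw [Finset.sum_map, Finset.card_map] at this
    exact this.trans (hm _)
  have h1 : l (σ 0) ≤ μ 0 := by
    have a := (lower {0}).trans (maxSum_le μ (by decide) (μ 0))
    simp only [Fin.sum_univ_four] at a
    rw [max_eq_right (by linarith), max_eq_right (by linarith), max_eq_right (by linarith),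
      max_eq_right (by linarith)] at a
    simpa using a
  have h2 : l (σ 0) + l (σ 1) ≤ μ 0 + μ 1 := by
    have a := (lower {0, 1}).trans (maxSum_le μ (by decide) (μ 1))
    simp only [Fin.sum_univ_four] at a
    rw [max_eq_left (by linarith), max_eq_left (by linarith), max_eq_right (by linarith),
      max_eq_right (by linarith)] at a
    simp at a
    linarith
  have h3 : l (σ 0) + l (σ 1) + l (σ 2) ≤ μ 0 + μ 1 + μ 2 := by
    have a := (lower {0, 1, 2}).trans (maxSum_le μ (by decide) (μ 2))
    simp only [Fin.sum_univ_four] at a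
    rw [max_eq_left (by linarith), max_eq_left (by linarith), max_eq_left (by linarith),
      max_eq_right (by linarith)] at a
    simp at a
    linarith
  simp only [Fin.sum_univ_four] at hsum ⊢
  have e3 : l (σ 3) = μ 0 + μ 1 + μ 2 + μ 3 - l (σ 0) - l (σ 1) - l (σ 2) := by linarith
  rw [e3]
  linarith [mul_nonneg (sub_nonneg.2 d01) (sub_nonneg.2 h1),
    mul_nonneg (sub_nonneg.2 d12) (sub_nonneg.2 h2),
    mul_nonneg (sub_nonneg.2 d23) (sub_nonneg.2 h3)]

/-- Rado's theorem in dimension four. -/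
lemma mem_convexHull_of_majorizes {l μ : Fin 4 → ℝ} (hμ : Antitone μ)
    (hmaj : Majorizes μ l) :
    l ∈ convexHull ℝ (Set.range fun τ : Equiv.Perm (Fin 4) => μ ∘ τ) := by
  by_contra hl
  obtain ⟨f, u, hf, hu⟩ := geometric_hahn_banach_closed_point (convex_convexHull ℝ _)
    ((Set.finite_range fun τ : Equiv.Perm (Fin 4) => μ ∘ τ).isClosed_convexHull ℝ) hl
  have hrep : ∀ x : Fin 4 → ℝ, f x = ∑ i, f (Pi.single i 1) * x i := fun x => by
    conv_lhs => rw [pi_eq_sum_univ' x]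
    simp [mul_comm]
  obtain ⟨σ, hσ⟩ := exists_perm_antitone fun i => f (Pi.single i 1)
  have hle := sum_mul_le_of_majorizes hμ hσ hmaj σ
  have hσμ := hf (μ ∘ σ.symm) (subset_convexHull ℝ _ ⟨σ.symm, rfl⟩)
  rw [hrep, ← Equiv.sum_comp σ] at hu hσμ
  simp only [Function.comp_apply, Equiv.symm_apply_apply] at hle hσμ
  linarith

/-- Extreme points of the set of absolutely separable two-qubit (diagonal) states are
majorization-maximal: if `λ` is an extreme point of the set and `μ` is a sorted
probability vector in the set with `μ ≻ λ`, then `μ = λ`. Equivalently, if `μ ≻ λ` with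
`μ ≠ λ`, then writing `λ` as a convex combination of permutations of `μ` (Uhlmann's
theorem) exhibits `λ` as a non-extreme point. -/
theorem extreme_point_majorization_maximal (l μ : Fin 4 → ℝ)
    (hlsort : Antitone l) (hμsort : Antitone μ)
    (hlnn : ∀ i, 0 ≤ l i) (hμnn : ∀ i, 0 ≤ μ i)
    (hlsum : ∑ i, l i = 1) (hμsum : ∑ i, μ i = 1)
    (hlAS : ASCond l) (hμAS : ASCond μ)
    (hmaj : Majorizes μ l)
    (hext : l ∈ Set.extremePoints ℝ ASSpectra) :
    μ = l := by
  have hsub : convexHull ℝ (Set.range fun τ : Equiv.Perm (Fin 4) => μ ∘ τ) ⊆ ASSpectra := by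
    refine convexHull_min ?_ convex_ASSpectra
    rintro _ ⟨τ, rfl⟩
    refine ⟨(Equiv.sum_comp τ μ).trans hμsum, fun i => hμnn _, τ⁻¹, ?_⟩
    have : (μ ∘ τ) ∘ (τ⁻¹ : Equiv.Perm (Fin 4)) = μ := by
      ext i
      simp
    rw [this]
    exact ⟨hμsort, hμAS⟩
  obtain ⟨τ, hτ⟩ := extremePoints_convexHull_subset
    (inter_extremePoints_subset_extremePoints_of_subset hsub
      ⟨mem_convexHull_of_majorizes hμsort hmaj, hext⟩)
  have := Tuple.unique_antitone (f := μ) (σ := 1) (τ := τ) hμsort (by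
    rw [show μ ∘ τ = l from hτ]; exact hlsort)
  exact this.trans hτ
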